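/- Define A₂(s, w, z) = ∑_{m, k primary, mk ≠ square} μ_{[i]}(k) L(s, χ̃_{mk}) / (N(m)^w N(k)^z) and C(s, w, z) = ∑_{q ≠ 0; m, k primary; mk ≠ square} μ_{[i]}(k) g(q, χ̃_{mk}) / (N(q)^s N(m)^w N(k)^z). Then, in the region where both sides are defined by absolute convergence or meromorphic continuation, A₂(s, w, z) = (4^{−s} π^{2s−1} Γ(1−s) / (4 Γ(s))) · C(1−s, s+w, s+z). -/

import Mathlib

open Complex Real Filter Topology
open scoped BigOperators Classical

noncomputable section

/-- The norm `N(n)` of a Gaussian integer, as a real number. -/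
def Nm (n : GaussianInt) : ℝ := ((Zsqrtd.norm n : ℤ) : ℝ)

/-- The element `1 + i` of `ℤ[i]`. -/
def ωg : GaussianInt := ⟨1, 1⟩

/-- The element `i` of `ℤ[i]`. -/
def ig : GaussianInt := ⟨0, 1⟩

/-- `n` is primary: `n ≡ 1 mod (1+i)³`. -/
def IsPrimary (n : GaussianInt) : Prop := ωg ^ 3 ∣ (n - 1)

/-- `ẽ(z) = exp(2πi(z/(2i) − z̄/(2i)))`. -/
def eT (z : ℂ) : ℂ :=
  Complex.exp (2 * (Real.pi : ℂ) * Complex.I *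
    (z / (2 * Complex.I) - (starRingEnd ℂ) z / (2 * Complex.I)))

/-- `χ a n = (a/n)` is the quadratic residue symbol of `ℤ[i]`: on odd primes `ϖ` it is
the `±1` (or `0`) value determined by `(a/ϖ) ≡ a^((N(ϖ)-1)/2) mod ϖ`, it is extended
multiplicatively in the denominator over odd elements, and equals `1` on units. -/
structure IsQuadSym (χ : GaussianInt → GaussianInt → ℤ) : Prop where
  val_prime : ∀ ϖ a : GaussianInt, Prime ϖ → ¬ ωg ∣ ϖ → ¬ ϖ ∣ a →
    (χ a ϖ = 1 ∨ χ a ϖ = -1) ∧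
      ϖ ∣ (a ^ (((Zsqrtd.norm ϖ).toNat - 1) / 2) - (χ a ϖ : GaussianInt))
  zero_of_dvd : ∀ ϖ a : GaussianInt, Prime ϖ → ϖ ∣ a → χ a ϖ = 0
  mul_den : ∀ a m n : GaussianInt, ¬ ωg ∣ m → ¬ ωg ∣ n → χ a (m * n) = χ a m * χ a n
  unit_den : ∀ a u : GaussianInt, IsUnit u → χ a u = 1

/-- `L s m = L(s, χ_m)`: the Hecke `L`-function attached to the quadratic symbol `(m/·)`,
given by its Dirichlet series over primary elements (= odd ideals) for `Re s > 1`,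
and analytic away from `s = 1`. -/
def IsHeckeL (χ : GaussianInt → GaussianInt → ℤ) (L : ℂ → GaussianInt → ℂ) : Prop :=
  (∀ (m : GaussianInt) (s : ℂ), 1 < s.re →
      L s m = ∑' n : {n : GaussianInt // IsPrimary n}, (χ m n.1 : ℂ) / (Nm n.1 : ℂ) ^ s) ∧
    ∀ m : GaussianInt, DifferentiableOn ℂ (fun s => L s m) {s : ℂ | s ≠ 1}

/-- The generalized Riemann hypothesis for the family of quadratic Hecke `L`-functions. -/
def GRHfor (L : ℂ → GaussianInt → ℂ) : Prop :=
  ∀ m : GaussianInt, m ≠ 0 → ∀ s : ℂ, 0 < s.re → s.re < 1 → L s m = 0 → s.re = 1 / 2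

/-- The absolute norm of an ideal of `ℤ[i]`, as a complex number. -/
def idN (I : Ideal GaussianInt) : ℂ := (Nat.card (GaussianInt ⧸ I) : ℂ)

/-- The Dedekind zeta function of `ℚ(i)`. -/
def IsDedekindZetaK (Z : ℂ → ℂ) : Prop :=
  (∀ s : ℂ, 1 < s.re → Z s = ∑' I : {I : Ideal GaussianInt // I ≠ ⊥}, idN I.1 ^ (-s)) ∧
    DifferentiableOn ℂ Z {s : ℂ | s ≠ 1}

/-- `ζ_K^{(2)}`: the Euler product of `ζ_K` with the factor at the prime `(1+i)` omitted. -/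
def zeta2 (Z : ℂ → ℂ) (s : ℂ) : ℂ := Z s * (1 - (2 : ℂ) ^ (-s))

/-- `P(z) = ∏_ϖ (1 + ((N(ϖ)^{z-1/2} − 1)(N(ϖ) + 1))⁻¹)`, over all primes of `ℤ[i]`. -/
def Pfun (z : ℂ) : ℂ :=
  ∏' I : {I : Ideal GaussianInt // I ≠ ⊥ ∧ I.IsPrime},
    (1 + 1 / ((idN I.1 ^ (z - 1 / 2) - 1) * (idN I.1 + 1)))

/-- The Euler product over odd primes appearing in the ratios-conjecture main term. -/
def ratioEuler (α β : ℂ) : ℂ :=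
  ∏' I : {I : Ideal GaussianInt // I ≠ ⊥ ∧ I.IsPrime ∧ (2 : GaussianInt) ∉ I},
    (1 + (idN I.1 ^ (α - β) - 1) / (idN I.1 ^ (1 + α - β) * (idN I.1 ^ (1 + α + β) - 1)))

/-- `g r n` is the quadratic Gauss sum `g(r,n) = ∑_{x mod n} (x/n) ẽ(rx/n)`:
for any complete residue system `S` modulo `n` it is given by the indicated finite sum. -/
def IsGaussSum (χ : GaussianInt → GaussianInt → ℤ) (g : GaussianInt → GaussianInt → ℂ) : Prop :=
  ∀ r n : GaussianInt, n ≠ 0 → ∀ S : Finset GaussianInt,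
    (∀ z : GaussianInt, ∃! x, x ∈ S ∧ n ∣ (z - x)) →
    g r n = ∑ x ∈ S, (χ x n : ℂ) * eT (GaussianInt.toComplex (r * x) / GaussianInt.toComplex n)

/-- A Dirichlet character modulo `q` on `ℤ[i]` (extended by zero). -/
def IsDirichletChar (q : GaussianInt) (χ : GaussianInt → ℂ) : Prop :=
  χ 1 = 1 ∧ (∀ a b : GaussianInt, χ (a * b) = χ a * χ b) ∧
    (∀ a b : GaussianInt, q ∣ (a - b) → χ a = χ b) ∧
    (∀ a : GaussianInt, IsCoprime a q → ‖χ a‖ = 1) ∧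
    (∀ a : GaussianInt, ¬ IsCoprime a q → χ a = 0)

/-- The Gauss sum `g(r,χ) = ∑_{x mod q} χ(x) ẽ(rx/q)` of a Dirichlet character modulo `q`. -/
def IsGaussSumChar (q : GaussianInt) (χ : GaussianInt → ℂ) (g : GaussianInt → ℂ) : Prop :=
  ∀ r : GaussianInt, ∀ S : Finset GaussianInt,
    (∀ z : GaussianInt, ∃! x, x ∈ S ∧ q ∣ (z - x)) →
    g r = ∑ x ∈ S, χ x * eT (GaussianInt.toComplex (r * x) / GaussianInt.toComplex q)

/-- A primary `n = a + bi` is of type 1 if `a ≡ 1, b ≡ 0 (mod 4)` (else it is of type 2). -/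
def IsTypeOne (n : GaussianInt) : Prop := n.re % 4 = 1 ∧ n.im % 4 = 0

/-- `ψ₁`, the principal character modulo `2` on `ℤ[i]`. -/
def psi1 (m : GaussianInt) : ℂ := if IsCoprime m 2 then 1 else 0

/-- `ψ₂`, the primitive quadratic character modulo `2` on `ℤ[i]`:
`ψ₂(m) = 1` for `m ≡ 1 (mod 2)`, `ψ₂(m) = −1` for `m ≡ i (mod 2)`, and `0` otherwise. -/
def psi2 (m : GaussianInt) : ℂ :=
  if (2 : GaussianInt) ∣ (m - 1) then 1 else if (2 : GaussianInt) ∣ (m - ig) then -1 else 0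

/-- `χ̃_n = ψ_j · (·/n)`, where `j` is the type of the primary element `n`. -/
def tchi (χ : GaussianInt → GaussianInt → ℤ) (n m : GaussianInt) : ℂ :=
  (if IsTypeOne n then psi1 m else psi2 m) * (χ m n : ℂ)

/-- The Möbius function `μ_{[i]}` on `ℤ[i]`. -/
def IsMobiusG (μ : GaussianInt → ℤ) : Prop :=
  μ 1 = 1 ∧ (∀ m n : GaussianInt, IsCoprime m n → μ (m * n) = μ m * μ n) ∧
    (∀ ϖ : GaussianInt, Prime ϖ → μ ϖ = -1) ∧
    (∀ (ϖ : GaussianInt) (k : ℕ), Prime ϖ → 2 ≤ k → μ (ϖ ^ k) = 0)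

/-- Pairs of primary elements whose product is not a perfect square. -/
abbrev NSqPairs : Type :=
  {p : GaussianInt × GaussianInt //
    IsPrimary p.1 ∧ IsPrimary p.2 ∧ ¬ ∃ r : GaussianInt, p.1 * p.2 = r ^ 2}

/-!
The character `χ̃_l` is periodic modulo `2l`, vanishes at multiples of `1 + i` and, because the
factor `ψ_j` compensates the value of `(·/l)` at `i`, is invariant under multiplication by units.
As every odd element has exactly one primary associate, `4 L(s, χ̃_l)` is the Dirichlet series of
`χ̃_l` over all nonzero Gaussian integers.

For any function `f` on `ℤ[i]` with period `M`, split `∑ f(n) N(n)^{-s}` into residue classes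
modulo `M`. Each class contributes a product of two one-dimensional theta series, and Poisson
summation turns the class of `x` into the theta series twisted by the phase `ẽ(qx/M)`. Summing
against `f` produces Gauss sums, whence a functional equation relating `s` and `1 - s` without any
primitivity assumption. Apply it to `f = χ̃_{mk}`, `M = 2mk`, and sum over `m` and `k`: the bound
`|g(q, χ̃_{mk})| ≤ N(2mk)` makes the triple series absolutely convergent.
-/

section NormAndCharacter

lemma Nm_eq_normSq (n : GaussianInt) : Nm n = normSq n :=
  GaussianInt.intCast_real_norm n

lemma Nm_nonneg (n : GaussianInt) : 0 ≤ Nm n :=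
  Nm_eq_normSq n ▸ normSq_nonneg _

lemma Nm_zero : Nm 0 = 0 := by simp [Nm]

lemma Nm_pos {n : GaussianInt} (hn : n ≠ 0) : 0 < Nm n :=
  Int.cast_pos.mpr (GaussianInt.norm_pos.mpr hn)

lemma Nm_mul (m n : GaussianInt) : Nm (m * n) = Nm m * Nm n := by
  simp only [Nm, Zsqrtd.norm_mul, Int.cast_mul]

lemma ofReal_Nm_ne_zero {n : GaussianInt} (hn : n ≠ 0) : (Nm n : ℂ) ≠ 0 :=
  ofReal_ne_zero.mpr (Nm_pos hn).ne'

lemma norm_Nm_cpow {n : GaussianInt} (hn : n ≠ 0) (s : ℂ) : ‖(Nm n : ℂ) ^ s‖ = Nm n ^ s.re :=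
  norm_cpow_eq_rpow_re_of_pos (Nm_pos hn) s

/-- The coordinates `(re, im)` of a Gaussian integer, as an isomorphism of lattices. -/
def gaussianIntEquivProd : GaussianInt ≃ₗ[ℤ] ℤ × ℤ where
  toFun n := (n.re, n.im)
  invFun p := ⟨p.1, p.2⟩
  map_add' _ _ := rfl
  map_smul' a n := by simp

instance : Countable GaussianInt := gaussianIntEquivProd.injective.countable

lemma norm_finTwoArrowEquiv_symm_sq_le_Nm (n : GaussianInt) :
    ‖(finTwoArrowEquiv ℤ).symm (gaussianIntEquivProd n)‖ ^ 2 ≤ Nm n := by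
  rw [Nm_eq_normSq, normSq_eq_norm_sq]
  gcongr
  rw [pi_norm_le_iff_of_nonneg (norm_nonneg _), Fin.forall_fin_two]
  have hre := abs_re_le_norm (n : ℂ)
  have him := abs_im_le_norm (n : ℂ)
  rw [← GaussianInt.intCast_re] at hre
  rw [← GaussianInt.intCast_im] at him
  exact ⟨hre, him⟩

lemma summable_one_div_Nm_rpow {σ : ℝ} (hσ : 1 < σ) :
    Summable fun n : GaussianInt => 1 / Nm n ^ σ := by
  let e := gaussianIntEquivProd.toEquiv.trans (finTwoArrowEquiv ℤ).symm
  have h := e.summable_iff.mpr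
    (EisensteinSeries.summable_one_div_norm_rpow (k := 2 * σ) (by linarith))
  refine h.of_nonneg_of_le
    (fun n => div_nonneg zero_le_one (Real.rpow_nonneg (Nm_nonneg n) _)) fun n => ?_
  obtain rfl | hn := eq_or_ne n 0
  · simpa only [Nm_zero, Real.zero_rpow (by linarith : σ ≠ 0), div_zero, Function.comp_apply]
      using Real.rpow_nonneg (norm_nonneg _) _
  have he : 0 < ‖e n‖ := norm_pos_iff.mpr fun h0 => hn (e.injective (h0.trans
    (funext fun i => by fin_cases i <;> rfl)))
  rw [Function.comp_apply, Real.rpow_neg he.le, Real.rpow_mul he.le, one_div]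
  gcongr
  exact_mod_cast norm_finTwoArrowEquiv_symm_sq_le_Nm n

lemma summable_div_Nm_cpow {f : GaussianInt → ℂ} {C : ℝ} (hf : ∀ n, ‖f n‖ ≤ C) {s : ℂ}
    (hs : 1 < s.re) : Summable fun n : GaussianInt => f n / (Nm n : ℂ) ^ s := by
  refine .of_norm_bounded ((summable_one_div_Nm_rpow hs).mul_left C) fun n => ?_
  obtain rfl | hn := eq_or_ne n 0
  · have hs0 : s ≠ 0 := fun h => by norm_num [h] at hs
    simp [Nm_zero, zero_cpow hs0, Real.zero_rpow (by linarith : s.re ≠ 0)]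
  · rw [norm_div, norm_Nm_cpow hn, mul_one_div]
    have := Nm_pos hn
    gcongr
    exact hf n

lemma eT_eq_exp (z : ℂ) : eT z = cexp (2 * π * I * z.im) := by
  rw [eT, ← sub_div, sub_conj, mul_div_mul_comm, div_self I_ne_zero]
  push_cast
  ring_nf

lemma norm_eT (z : ℂ) : ‖eT z‖ = 1 := by
  rw [eT_eq_exp, show 2 * π * I * z.im = ((2 * π * z.im : ℝ) : ℂ) * I by push_cast; ring,
    norm_exp_ofReal_mul_I]

lemma normSq_add_div {M : GaussianInt} (hM : M ≠ 0) (x n : GaussianInt) :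
    normSq (n + x / M) = Nm (x + M * n) / Nm M := by
  have hM' : (M : ℂ) ≠ 0 := mt GaussianInt.toComplex_eq_zero.mp hM
  rw [Nm_eq_normSq, Nm_eq_normSq, ← normSq_div, GaussianInt.toComplex_add,
    GaussianInt.toComplex_mul]
  congr 1
  field_simp
  ring

lemma injective_add_mul {M : GaussianInt} (hM : M ≠ 0) (x : GaussianInt) :
    Function.Injective fun n => x + M * n :=
  (add_right_injective x).comp (mul_right_injective₀ hM)

end NormAndCharacter

section ThetaPair

open HurwitzZeta Asymptotics Set

lemma isBigO_mul_sub_mul {α R : Type*} [SeminormedRing R] {l : Filter α} {f g : α → R} {a b : R}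
    {u : α → ℝ} (hf : (f · - a) =O[l] u) (hg : (g · - b) =O[l] u)
    (hg_bdd : (g · - b) =O[l] (fun _ => (1 : ℝ))) :
    (fun x => f x * g x - a * b) =O[l] u := by
  have hfg : (fun x => (f x - a) * (g x - b)) =O[l] u := by
    simpa only [mul_one] using hf.mul hg_bdd
  have hfb : (fun x => (f x - a) * b) =O[l] u := by
    simpa only [mul_one] using hf.mul (isBigO_const_const b (one_ne_zero' ℝ) l)
  exact ((hfg.add (hg.const_mul_left a)).add hfb).congr_left fun x => by noncomm_ring

/-- The pointwise product of two functional-equation pairs, whose weight is the sum of the two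
weights. Continuity is assumed because local integrability does not pass to products. -/
def mulFEPair (P Q : WeakFEPair ℂ) (hPf : ContinuousOn P.f (Ioi 0)) (hPg : ContinuousOn P.g (Ioi 0))
    (hQf : ContinuousOn Q.f (Ioi 0)) (hQg : ContinuousOn Q.g (Ioi 0)) : WeakFEPair ℂ where
  f t := P.f t * Q.f t
  g t := P.g t * Q.g t
  k := P.k + Q.k
  ε := P.ε * Q.ε
  f₀ := P.f₀ * Q.f₀
  g₀ := P.g₀ * Q.g₀
  hf_int := (hPf.mul hQf).locallyIntegrableOn measurableSet_Ioi
  hg_int := (hPg.mul hQg).locallyIntegrableOn measurableSet_Ioi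
  hk := add_pos P.hk Q.hk
  hε := mul_ne_zero P.hε Q.hε
  hf_top r := isBigO_mul_sub_mul (P.hf_top r) (Q.hf_top r)
    (by simpa only [Real.rpow_zero] using Q.hf_top 0)
  hg_top r := isBigO_mul_sub_mul (P.hg_top r) (Q.hg_top r)
    (by simpa only [Real.rpow_zero] using Q.hg_top 0)
  h_feq x hx := by
    rw [P.h_feq x hx, Q.h_feq x hx, Real.rpow_add hx]
    simp only [smul_eq_mul, ofReal_mul]
    ring

/-- The functional-equation pair of the theta functions `∑ exp(-π N(n + c) t)` and
`∑ ẽ(q c) exp(-π N(q) t)`, summed over `n, q ∈ ℤ[i]`. Each of them is the product of the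
one-dimensional theta functions attached to the coordinates of `c`. -/
def thetaFEPair (c : ℂ) : WeakFEPair ℂ :=
  have hf (a : UnitAddCircle) : ContinuousOn (hurwitzEvenFEPair a).f (Ioi 0) :=
    continuous_ofReal.comp_continuousOn (continuousOn_evenKernel a)
  have hg (a : UnitAddCircle) : ContinuousOn (hurwitzEvenFEPair a).g (Ioi 0) :=
    continuous_ofReal.comp_continuousOn (continuousOn_cosKernel a)
  mulFEPair (hurwitzEvenFEPair c.re) (hurwitzEvenFEPair c.im) (hf _) (hg _) (hf _) (hg _)

lemma thetaFEPair_k (c : ℂ) : (thetaFEPair c).k = 1 := add_halves 1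

lemma thetaFEPair_ε (c : ℂ) : (thetaFEPair c).ε = 1 := one_mul 1

lemma thetaFEPair_Λ_eq_symm (c s : ℂ) :
    (thetaFEPair c).Λ s = (thetaFEPair c).symm.Λ (1 - s) := by
  simpa [thetaFEPair_k, thetaFEPair_ε] using (thetaFEPair c).functional_equation (1 - s)

lemma differentiableAt_thetaFEPair_Λ (c : ℂ) {s : ℂ} (hs0 : s ≠ 0) (hs1 : s ≠ 1) :
    DifferentiableAt ℂ (thetaFEPair c).Λ s :=
  (thetaFEPair c).differentiableAt_Λ (.inl hs0) (.inl (by rwa [thetaFEPair_k, ofReal_one]))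

lemma hasSum_int_add_eq_zero (a : ℝ) :
    HasSum (fun n : ℤ => if (n + a : ℝ) = 0 then (1 : ℝ) else 0)
      (if (a : UnitAddCircle) = 0 then 1 else 0) := by
  have h := (hasSum_int_evenKernel a one_pos).sub (hasSum_int_evenKernel₀ a one_pos)
  rw [sub_sub_cancel] at h
  refine h.congr_fun fun n => ?_
  split_ifs with hn <;> simp [hn]

lemma ite_normSq_eq_zero_exp (z : ℂ) (t : ℝ) :
    (if normSq z = 0 then 0 else rexp (-π * normSq z * t)) =
      rexp (-π * z.re ^ 2 * t) * rexp (-π * z.im ^ 2 * t) -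
        (if z.re = 0 then 1 else 0) * (if z.im = 0 then 1 else 0) := by
  obtain rfl | hz := eq_or_ne z 0
  · simp
  have hz' : ¬ (z.re = 0 ∧ z.im = 0) := fun h => hz (Complex.ext h.1 h.2)
  rw [if_neg (mt normSq_eq_zero.mp hz), ite_zero_mul_ite_zero, if_neg hz', sub_zero,
    ← Real.exp_add, normSq_apply]
  ring_nf

lemma hasSum_thetaFEPair_f (c : ℂ) {t : ℝ} (ht : 0 < t) :
    HasSum (fun n : GaussianInt => if normSq (n + c) = 0 then 0 else
        1 * (rexp (-π * normSq (n + c) * t) : ℂ))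
      ((thetaFEPair c).f t - (thetaFEPair c).f₀) := by
  have h_re := hasSum_int_evenKernel c.re ht
  have h_im := hasSum_int_evenKernel c.im ht
  have h_exp := h_re.mul h_im (h_re.summable.mul_of_nonneg h_im.summable
    (fun _ => (Real.exp_pos _).le) fun _ => (Real.exp_pos _).le)
  have h_re₀ := hasSum_int_add_eq_zero c.re
  have h_im₀ := hasSum_int_add_eq_zero c.im
  have h_zero := h_re₀.mul h_im₀ (h_re₀.summable.mul_of_nonneg h_im₀.summable
    (fun _ => by positivity) fun _ => by positivity)
  have h := hasSum_ofReal.mpr (gaussianIntEquivProd.toEquiv.hasSum_iff.mpr (h_exp.sub h_zero))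
  convert h using 1
  · funext n
    have hn := ite_normSq_eq_zero_exp (n + c) t
    rw [add_re, add_im, ← GaussianInt.intCast_re, ← GaussianInt.intCast_im] at hn
    rw [one_mul, ← ofReal_zero, ← apply_ite, hn]
    rfl
  · simp only [ofReal_sub, ofReal_mul, apply_ite ofReal, ofReal_one, ofReal_zero]
    rfl

lemma eT_mul_exp_Nm (q : GaussianInt) (c : ℂ) (t : ℝ) :
    eT (q * c) * (rexp (-π * Nm q * t) : ℂ) =
      cexp (2 * π * I * c.im * q.re) * rexp (-π * (q.re : ℝ) ^ 2 * t) *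
        (cexp (2 * π * I * c.re * q.im) * rexp (-π * (q.im : ℝ) ^ 2 * t)) := by
  rw [eT_eq_exp, Nm_eq_normSq, normSq_apply, mul_im, ← GaussianInt.intCast_re,
    ← GaussianInt.intCast_im]
  push_cast
  simp only [← Complex.exp_add]
  ring_nf

lemma hasSum_thetaFEPair_g (c : ℂ) {t : ℝ} (ht : 0 < t) :
    HasSum (fun q : GaussianInt => if Nm q = 0 then 0 else
        eT (q * c) * (rexp (-π * Nm q * t) : ℂ))
      ((thetaFEPair c).g t - (thetaFEPair c).g₀) := by
  have h_re := hasSum_int_cosKernel c.re ht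
  have h_im := hasSum_int_cosKernel c.im ht
  have h_summable := summable_mul_of_summable_norm h_im.summable.norm h_re.summable.norm
  have h_prod := h_im.mul h_re h_summable
  have h_all : HasSum (fun q : GaussianInt => eT (q * c) * (rexp (-π * Nm q * t) : ℂ))
      ((thetaFEPair c).g t) := by
    have hg : (thetaFEPair c).g t = cosKernel c.im t * cosKernel c.re t := mul_comm _ _
    simp only [eT_mul_exp_Nm, hg]
    exact gaussianIntEquivProd.toEquiv.hasSum_iff.mpr h_prod
  have hg₀ : (thetaFEPair c).g₀ = eT ((0 : GaussianInt) * c) * (rexp (-π * Nm 0 * t) : ℂ) := by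
    rw [eT_mul_exp_Nm]
    simp [thetaFEPair, mulFEPair, hurwitzEvenFEPair]
  have hNm (q : GaussianInt) : Nm q = 0 ↔ q = 0 := by simp [Nm_eq_normSq]
  rw [hg₀]
  exact (hasSum_ite_sub_hasSum h_all 0).congr_fun fun q => if_congr (hNm q) rfl rfl

lemma hasSum_thetaFEPair_Λ (c : ℂ) {s : ℂ} (hs : 1 < s.re)
    (h_sum : Summable fun n : GaussianInt => 1 / normSq (n + c) ^ s.re) :
    HasSum (fun n : GaussianInt => (π : ℂ) ^ (-s) * Complex.Gamma s * 1 / (normSq (n + c) : ℂ) ^ s)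
      ((thetaFEPair c).Λ s) := by
  rw [← ((thetaFEPair c).hasMellin (s := s) (by rwa [thetaFEPair_k])).2]
  exact hasSum_mellin_pi_mul₀ (fun _ => normSq_nonneg _) (by linarith)
    (fun t ht => hasSum_thetaFEPair_f c ht) (by simpa only [norm_one] using h_sum)

lemma hasSum_thetaFEPair_symm_Λ (c : ℂ) {s : ℂ} (hs : 1 < s.re) :
    HasSum (fun q : GaussianInt => (π : ℂ) ^ (-s) * Complex.Gamma s * eT (q * c) / (Nm q : ℂ) ^ s)
      ((thetaFEPair c).symm.Λ s) := by
  rw [← ((thetaFEPair c).symm.hasMellin (s := s) (by rwa [WeakFEPair.symm, thetaFEPair_k])).2]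
  exact hasSum_mellin_pi_mul₀ Nm_nonneg (by linarith) (fun t ht => hasSum_thetaFEPair_g c ht)
    (by simpa only [norm_eT] using summable_one_div_Nm_rpow hs)

end ThetaPair

section ResidueSystems

/-- `S` is a complete residue system modulo `M`. -/
def IsResidueSystem (M : GaussianInt) (S : Finset GaussianInt) : Prop :=
  ∀ z : GaussianInt, ∃! x, x ∈ S ∧ M ∣ z - x

variable {M : GaussianInt} {S : Finset GaussianInt}

lemma IsResidueSystem.bijective_mk (hS : IsResidueSystem M S) :
    Function.Bijective fun x : S => Ideal.Quotient.mk (Ideal.span {M}) x := by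
  refine ⟨fun x y hxy => ?_, fun c => ?_⟩
  · rw [Ideal.Quotient.eq, Ideal.mem_span_singleton] at hxy
    exact Subtype.ext ((hS x).unique ⟨x.2, by simp⟩ ⟨y.2, hxy⟩)
  · obtain ⟨z, rfl⟩ := Ideal.Quotient.mk_surjective c
    obtain ⟨x, ⟨hx, hzx⟩, -⟩ := hS z
    exact ⟨⟨x, hx⟩, .symm (by rwa [Ideal.Quotient.eq, Ideal.mem_span_singleton])⟩

lemma IsResidueSystem.bijective_add_mul (hM : M ≠ 0) (hS : IsResidueSystem M S) :
    Function.Bijective fun p : S × GaussianInt => (p.1 : GaussianInt) + M * p.2 := by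
  refine ⟨fun p q hpq => ?_, fun z => ?_⟩
  · have h1 : p.1 = q.1 := Subtype.ext ((hS (p.1 + M * p.2)).unique ⟨p.1.2, p.2, by ring⟩
      ⟨q.1.2, q.2, sub_eq_of_eq_add' hpq⟩)
    simp only [h1] at hpq
    exact Prod.ext h1 (injective_add_mul hM q.1 hpq)
  · obtain ⟨x, ⟨hx, n, hn⟩, -⟩ := hS z
    exact ⟨⟨⟨x, hx⟩, n⟩, add_eq_of_eq_sub' hn.symm⟩

lemma IsResidueSystem.tsum_eq_sum (hM : M ≠ 0) (hS : IsResidueSystem M S) {F : GaussianInt → ℂ}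
    (hF : Summable F) : ∑' n, F n = ∑ x ∈ S, ∑' n, F (x + M * n) := by
  let e := Equiv.ofBijective _ (hS.bijective_add_mul hM)
  calc ∑' n, F n = ∑' p, F (e p) := (e.tsum_eq F).symm
    _ = ∑' x : S, ∑' n, F (x + M * n) := Summable.tsum_prod (e.summable_iff.mpr hF)
    _ = ∑ x ∈ S, ∑' n, F (x + M * n) := by
      rw [tsum_fintype, Finset.sum_coe_sort S fun x => ∑' n, F (x + M * n)]

/-- The basis `1, i` of `ℤ[i]` over `ℤ`. -/
def gaussianIntBasis : Module.Basis (Fin 2) ℤ GaussianInt :=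
  (Module.Basis.finTwoProd ℤ).map gaussianIntEquivProd.symm

instance : Module.Free ℤ GaussianInt := .of_basis gaussianIntBasis

instance : Module.Finite ℤ GaussianInt := .of_basis gaussianIntBasis

lemma algebraNorm_gaussianInt (n : GaussianInt) : Algebra.norm ℤ n = Zsqrtd.norm n := by
  rw [Algebra.norm_eq_matrix_det gaussianIntBasis, Matrix.det_fin_two, Zsqrtd.norm_def]
  simp [Algebra.leftMulMatrix_eq_repr_mul, gaussianIntBasis, gaussianIntEquivProd]

lemma natCard_quotient_span (M : GaussianInt) :
    (Nat.card (GaussianInt ⧸ Ideal.span {M}) : ℝ) = Nm M := by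
  have h : Nat.card (GaussianInt ⧸ Ideal.span {M}) = (Zsqrtd.norm M).natAbs := by
    rw [← algebraNorm_gaussianInt, ← Ideal.absNorm_span_singleton]
    rfl
  rw [h, Nm, Nat.cast_natAbs, abs_of_nonneg (GaussianInt.norm_nonneg M)]

lemma IsResidueSystem.card_eq_Nm (hS : IsResidueSystem M S) : (S.card : ℝ) = Nm M := by
  rw [← natCard_quotient_span, ← Nat.card_eq_of_bijective _ hS.bijective_mk,
    Nat.card_eq_fintype_card, Fintype.card_coe]

lemma exists_isResidueSystem (hM : M ≠ 0) : ∃ S, IsResidueSystem M S := by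
  have : Finite (GaussianInt ⧸ Ideal.span {M}) :=
    Ideal.finiteQuotientOfFreeOfNeBot _ (mt Ideal.span_singleton_eq_bot.mp hM)
  have := Fintype.ofFinite (GaussianInt ⧸ Ideal.span {M})
  let mk := Ideal.Quotient.mk (Ideal.span {M})
  have hmk {z x : GaussianInt} : mk z = mk x ↔ M ∣ z - x := by
    rw [Ideal.Quotient.eq, Ideal.mem_span_singleton]
  let out := Function.surjInv (Ideal.Quotient.mk_surjective (I := Ideal.span {M}))
  have hout (c : GaussianInt ⧸ Ideal.span {M}) : mk (out c) = c := Function.surjInv_eq _ c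
  refine ⟨Finset.univ.image out, fun z => ⟨out (mk z), ⟨?_, hmk.mp (hout _).symm⟩, ?_⟩⟩
  · exact Finset.mem_image_of_mem _ (Finset.mem_univ _)
  · rintro _ ⟨hx, hzx⟩
    obtain ⟨c, -, rfl⟩ := Finset.mem_image.mp hx
    rw [hmk.mpr hzx, hout]

lemma IsResidueSystem.exists_norm_le {f : GaussianInt → ℂ} (hS : IsResidueSystem M S)
    (hf : ∀ a b, M ∣ a - b → f a = f b) : ∃ C, ∀ n, ‖f n‖ ≤ C := by
  refine ⟨∑ x ∈ S, ‖f x‖, fun n => ?_⟩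
  obtain ⟨x, ⟨hx, hnx⟩, -⟩ := hS n
  rw [hf n x hnx]
  exact Finset.single_le_sum (f := fun x => ‖f x‖) (fun _ _ => norm_nonneg _) hx

lemma IsGaussSumChar.norm_le {f g : GaussianInt → ℂ} {C : ℝ} (hM : M ≠ 0)
    (hg : IsGaussSumChar M f g) (hf : ∀ n, ‖f n‖ ≤ C) (r : GaussianInt) : ‖g r‖ ≤ C * Nm M := by
  obtain ⟨S, hS⟩ := exists_isResidueSystem hM
  rw [hg r S hS]
  calc ‖∑ x ∈ S, f x * eT (GaussianInt.toComplex (r * x) / M)‖ ≤ ∑ _x ∈ S, C :=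
        norm_sum_le_of_le S fun x _ => by
          rw [norm_mul, norm_eT, mul_one]
          exact hf x
    _ = C * Nm M := by rw [Finset.sum_const, nsmul_eq_mul, hS.card_eq_Nm, mul_comm]

end ResidueSystems

section PeriodicDirichletSeries

variable {M : GaussianInt} {S : Finset GaussianInt} {f g : GaussianInt → ℂ} {s : ℂ}

lemma hasSum_thetaFEPair_div_Λ (hM : M ≠ 0) (x : GaussianInt) (hs : 1 < s.re) :
    HasSum (fun n => (π : ℂ) ^ (-s) * Complex.Gamma s * (Nm M : ℂ) ^ s *
      (1 / (Nm (x + M * n) : ℂ) ^ s)) ((thetaFEPair (x / M)).Λ s) := by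
  have hNm := Nm_pos hM
  refine (hasSum_thetaFEPair_Λ (x / M) hs ?_).congr_fun fun n => ?_
  · refine (((summable_one_div_Nm_rpow hs).comp_injective (injective_add_mul hM x)).mul_left
      (Nm M ^ s.re)).congr fun n => ?_
    rw [normSq_add_div hM, Real.div_rpow (Nm_nonneg _) hNm.le, one_div_div, Function.comp_apply,
      mul_one_div]
  · rw [normSq_add_div hM, ofReal_div, div_cpow_ofReal_nonneg (Nm_nonneg _) hNm.le,
      div_div_eq_mul_div]
    ring

/-- The meromorphic continuation of the Dirichlet series `∑ f(n) N(n)^(-s)` of a function `f` on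
`ℤ[i]` of period `M`, as a combination of completed partial zeta functions of the residue classes
`x ∈ S` modulo `M`. -/
def periodicZeta (M : GaussianInt) (S : Finset GaussianInt) (f : GaussianInt → ℂ) (s : ℂ) : ℂ :=
  (Complex.Gamma s)⁻¹ * (π : ℂ) ^ s * (Nm M : ℂ) ^ (-s) *
    ∑ x ∈ S, f x * (thetaFEPair (x / M)).Λ s

lemma periodicZeta_eq_tsum (hM : M ≠ 0) (hS : IsResidueSystem M S)
    (hf : ∀ a b, M ∣ a - b → f a = f b) (hs : 1 < s.re) :
    periodicZeta M S f s = ∑' n, f n / (Nm n : ℂ) ^ s := by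
  obtain ⟨C, hC⟩ := hS.exists_norm_le hf
  have hΛ : ∀ x ∈ S, f x * (thetaFEPair (x / M)).Λ s =
      (π : ℂ) ^ (-s) * Complex.Gamma s * (Nm M : ℂ) ^ s *
        ∑' n, f (x + M * n) / (Nm (x + M * n) : ℂ) ^ s := fun x _ => by
    rw [← (hasSum_thetaFEPair_div_Λ hM x hs).tsum_eq, ← tsum_mul_left, ← tsum_mul_left]
    refine tsum_congr fun n => ?_
    rw [hf (x + M * n) x ⟨n, add_sub_cancel_left x _⟩]
    ring
  have hπ : (π : ℂ) ^ s ≠ 0 := cpow_ne_zero_iff.mpr (.inl (ofReal_ne_zero.mpr pi_ne_zero))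
  have hNm : (Nm M : ℂ) ^ s ≠ 0 := cpow_ne_zero_iff.mpr (.inl (ofReal_Nm_ne_zero hM))
  have hΓ : Complex.Gamma s ≠ 0 := Gamma_ne_zero_of_re_pos (by linarith)
  rw [periodicZeta, Finset.sum_congr rfl hΛ, ← Finset.mul_sum,
    hS.tsum_eq_sum hM (summable_div_Nm_cpow hC hs), cpow_neg, cpow_neg]
  field_simp

lemma differentiableAt_periodicZeta (hM : M ≠ 0) (hs0 : s ≠ 0) (hs1 : s ≠ 1) :
    DifferentiableAt ℂ (periodicZeta M S f) s := by
  have hΓ := differentiable_one_div_Gamma s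
  have hπ : DifferentiableAt ℂ (fun s : ℂ => (π : ℂ) ^ s) s :=
    differentiableAt_id.const_cpow (.inl (ofReal_ne_zero.mpr pi_ne_zero))
  have hNm : DifferentiableAt ℂ (fun s : ℂ => (Nm M : ℂ) ^ (-s)) s :=
    differentiableAt_id.neg.const_cpow (.inl (ofReal_Nm_ne_zero hM))
  have hΛ : DifferentiableAt ℂ (fun s => ∑ x ∈ S, f x * (thetaFEPair (x / M)).Λ s) s :=
    .fun_sum fun x _ => (differentiableAt_thetaFEPair_Λ _ hs0 hs1).const_mul _
  exact ((hΓ.mul hπ).mul hNm).mul hΛ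

lemma periodicZeta_eq_tsum_dual (hS : IsResidueSystem M S) (hg : IsGaussSumChar M f g)
    (hs : s.re < 0) :
    periodicZeta M S f s =
      (Nm M : ℂ) ^ (-s) * ((π : ℂ) ^ (2 * s - 1) * Complex.Gamma (1 - s) / Complex.Gamma s) *
        ∑' q, g q / (Nm q : ℂ) ^ (1 - s) := by
  have hs' : 1 < (1 - s).re := by rw [sub_re, one_re]; linarith
  have hΛ (x : GaussianInt) : HasSum (fun q : GaussianInt =>
      f x * ((π : ℂ) ^ (-(1 - s)) * Complex.Gamma (1 - s) * eT (q * (x / M)) /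
        (Nm q : ℂ) ^ (1 - s))) (f x * (thetaFEPair (x / M)).Λ s) := by
    rw [thetaFEPair_Λ_eq_symm]
    exact (hasSum_thetaFEPair_symm_Λ _ hs').mul_left _
  have hterm (q : GaussianInt) :
      ∑ x ∈ S, f x * ((π : ℂ) ^ (-(1 - s)) * Complex.Gamma (1 - s) * eT (q * (x / M)) /
        (Nm q : ℂ) ^ (1 - s)) =
      (π : ℂ) ^ (-(1 - s)) * Complex.Gamma (1 - s) * (g q / (Nm q : ℂ) ^ (1 - s)) := by
    rw [hg q S hS, Finset.sum_div, Finset.mul_sum]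
    refine Finset.sum_congr rfl fun x _ => ?_
    rw [GaussianInt.toComplex_mul, mul_div_assoc (q : ℂ)]
    ring
  rw [periodicZeta, ← (hasSum_sum fun x _ => hΛ x).tsum_eq, tsum_congr hterm, tsum_mul_left,
    show 2 * s - 1 = s + -(1 - s) by ring, cpow_add _ _ (ofReal_ne_zero.mpr pi_ne_zero)]
  ring

lemma eqOn_compl_of_eqOn_one_lt_re {L R : ℂ → ℂ} {T : Set ℂ} (hT : T.Finite)
    (hL : DifferentiableOn ℂ L Tᶜ) (hR : DifferentiableOn ℂ R Tᶜ) (hT2 : (2 : ℂ) ∉ T)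
    (h : ∀ s : ℂ, 1 < s.re → L s = R s) : Set.EqOn L R Tᶜ := by
  have hopen : IsOpen Tᶜ := hT.isClosed.isOpen_compl
  have hconn : IsPreconnected Tᶜ :=
    (hT.countable.isConnected_compl_of_one_lt_rank (by simp)).isPreconnected
  have hhalf : {s : ℂ | 1 < s.re} ∈ 𝓝 (2 : ℂ) :=
    (isOpen_lt continuous_const continuous_re).mem_nhds (by simp)
  exact (hL.analyticOnNhd hopen).eqOn_of_preconnected_of_eventuallyEq (hR.analyticOnNhd hopen)
    hconn hT2 (Filter.mem_of_superset hhalf h)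

theorem functional_equation_of_periodic (hM : M ≠ 0) (hf : ∀ a b, M ∣ a - b → f a = f b)
    (hg : IsGaussSumChar M f g) {L : ℂ → ℂ} (hL : Differentiable ℂ L)
    (hL_eq : ∀ s : ℂ, 1 < s.re → L s = ∑' n, f n / (Nm n : ℂ) ^ s) (hs : s.re < 0) :
    L s = (Nm M : ℂ) ^ (-s) * ((π : ℂ) ^ (2 * s - 1) * Complex.Gamma (1 - s) / Complex.Gamma s) *
      ∑' q, g q / (Nm q : ℂ) ^ (1 - s) := by
  obtain ⟨S, hS⟩ := exists_isResidueSystem hM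
  have hR : DifferentiableOn ℂ (periodicZeta M S f) ({0, 1} : Set ℂ)ᶜ := fun z hz => by
    rw [Set.mem_compl_iff, Set.mem_insert_iff, Set.mem_singleton_iff, not_or] at hz
    exact (differentiableAt_periodicZeta hM hz.1 hz.2).differentiableWithinAt
  have hs01 : s ∈ ({0, 1} : Set ℂ)ᶜ := by
    rintro (rfl | rfl) <;> norm_num at hs
  rw [← periodicZeta_eq_tsum_dual hS hg hs]
  exact eqOn_compl_of_eqOn_one_lt_re (Set.toFinite _) hL.differentiableOn hR (by norm_num)
    (fun z hz => (hL_eq z hz).trans (periodicZeta_eq_tsum hM hS hf hz).symm) hs01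

end PeriodicDirichletSeries

section PrimaryElements

variable {m n : GaussianInt}

lemma ωg_dvd_iff : ωg ∣ n ↔ (n.re + n.im) % 2 = 0 := by
  refine ⟨?_, fun h => ⟨⟨(n.re + n.im) / 2, (n.im - n.re) / 2⟩, ?_⟩⟩
  · rintro ⟨c, rfl⟩
    simp only [ωg, Zsqrtd.re_mul, Zsqrtd.im_mul]
    omega
  · ext <;> simp only [ωg, Zsqrtd.re_mul, Zsqrtd.im_mul] <;> omega

lemma isPrimary_iff :
    IsPrimary n ↔ (n.re % 4 = 1 ∧ n.im % 4 = 0) ∨ (n.re % 4 = 3 ∧ n.im % 4 = 2) := by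
  have hω : ωg ^ 3 = ⟨-2, 2⟩ := by ext <;> simp [ωg, pow_succ]
  rw [IsPrimary, hω]
  refine ⟨?_, fun h => ⟨⟨(n.im - n.re + 1) / 4, (1 - n.re - n.im) / 4⟩, ?_⟩⟩
  · rintro ⟨c, hc⟩
    have hre := congrArg Zsqrtd.re hc
    have him := congrArg Zsqrtd.im hc
    simp only [Zsqrtd.re_mul, Zsqrtd.im_mul, Zsqrtd.re_sub, Zsqrtd.im_sub, Zsqrtd.re_one,
      Zsqrtd.im_one] at hre him
    omega
  · ext <;> simp only [Zsqrtd.re_mul, Zsqrtd.im_mul, Zsqrtd.re_sub, Zsqrtd.im_sub, Zsqrtd.re_one,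
      Zsqrtd.im_one] <;> omega

lemma IsPrimary.not_ωg_dvd (hn : IsPrimary n) : ¬ ωg ∣ n := by
  rw [isPrimary_iff] at hn
  rw [ωg_dvd_iff]
  omega

lemma IsPrimary.ne_zero (hn : IsPrimary n) : n ≠ 0 := by
  rintro rfl
  exact hn.not_ωg_dvd (dvd_zero _)

lemma IsPrimary.mul (hm : IsPrimary m) (hn : IsPrimary n) : IsPrimary (m * n) := by
  have h : m * n - 1 = m * (n - 1) + (m - 1) := by ring
  rw [IsPrimary, h]
  exact dvd_add (dvd_mul_of_dvd_right hn m) hm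

lemma norm_emod_four (hn : ¬ ωg ∣ n) : Zsqrtd.norm n % 4 = 1 := by
  rw [ωg_dvd_iff] at hn
  have h : Zsqrtd.norm n = n.re ^ 2 + n.im ^ 2 := by rw [Zsqrtd.norm_def]; ring
  have hpar : n.re % 2 = 1 ∧ n.im % 2 = 0 ∨ n.re % 2 = 0 ∧ n.im % 2 = 1 := by omega
  obtain ⟨hodd, heven⟩ | ⟨heven, hodd⟩ := hpar
  · have := Int.sq_mod_four_eq_one_of_odd (Int.odd_iff.mpr hodd)
    obtain ⟨b, hb⟩ := Int.dvd_of_emod_eq_zero heven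
    rw [hb, mul_pow] at h
    omega
  · have := Int.sq_mod_four_eq_one_of_odd (Int.odd_iff.mpr hodd)
    obtain ⟨b, hb⟩ := Int.dvd_of_emod_eq_zero heven
    rw [hb, mul_pow] at h
    omega

lemma IsPrimary.isTypeOne_iff (hn : IsPrimary n) : IsTypeOne n ↔ Zsqrtd.norm n % 8 = 1 := by
  have h : Zsqrtd.norm n = n.re ^ 2 + n.im ^ 2 := by rw [Zsqrtd.norm_def]; ring
  rw [isPrimary_iff] at hn
  have hre : 8 ∣ n.re ^ 2 - 1 := Int.eight_dvd_sq_sub_one_of_odd (Int.odd_iff.mpr (by omega))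
  obtain ⟨b, hb⟩ : ∃ b, n.im = 2 * b := ⟨n.im / 2, by omega⟩
  have him : n.im ^ 2 = 4 * b ^ 2 := by rw [hb]; ring
  have hb2 : b ^ 2 % 2 = b % 2 := by
    rcases Int.emod_two_eq_zero_or_one b with h | h <;> simp [pow_two, Int.mul_emod, h]
  rw [IsTypeOne]
  omega

lemma ig_sq : ig ^ 2 = -1 := by
  ext <;> simp [ig, pow_succ]

lemma isUnit_ig : IsUnit ig :=
  .of_mul_eq_one (-ig) (by linear_combination -ig_sq)

lemma not_dvd_two_of_prime {p : GaussianInt} (hp : Prime p) (hodd : ¬ ωg ∣ p) : ¬ p ∣ 2 := by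
  intro h2
  have h_dvd : Zsqrtd.norm p ∣ 4 := by
    simpa using! map_dvd Zsqrtd.normMonoidHom h2
  have h_le := Int.le_of_dvd four_pos h_dvd
  have h_pos := GaussianInt.norm_pos.mpr hp.ne_zero
  have h_one : Zsqrtd.norm p = 1 := by have := norm_emod_four hodd; omega
  exact hp.not_isUnit (Zsqrtd.norm_eq_one_iff.mp (by rw [h_one]; rfl))

end PrimaryElements

section QuadraticSymbol

variable {χ : GaussianInt → GaussianInt → ℤ} {p n a b : GaussianInt}

lemma int_eq_of_prime_dvd_sub (hp : Prime p) (hodd : ¬ ωg ∣ p) {e f : ℤ} (he : IsUnit e)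
    (hf : IsUnit f) (h : p ∣ (e : GaussianInt) - f) : e = f := by
  have h2 := not_dvd_two_of_prime hp hodd
  obtain rfl | rfl := Int.isUnit_iff.mp he <;> obtain rfl | rfl := Int.isUnit_iff.mp hf
  · rfl
  · exact absurd (by convert h using 1; norm_num) h2
  · exact absurd (dvd_neg.mp (by convert h using 1; norm_num)) h2
  · rfl

lemma IsQuadSym.isUnit (hχ : IsQuadSym χ) (hp : Prime p) (hodd : ¬ ωg ∣ p) (ha : ¬ p ∣ a) :
    IsUnit (χ a p) :=
  Int.isUnit_iff.mpr (hχ.val_prime p a hp hodd ha).1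

lemma IsQuadSym.eq_of_dvd_pow_sub (hχ : IsQuadSym χ) (hp : Prime p) (hodd : ¬ ωg ∣ p)
    (ha : ¬ p ∣ a) {e : ℤ} (he : IsUnit e) (h : p ∣ a ^ ((p.norm.toNat - 1) / 2) - e) :
    χ a p = e := by
  refine int_eq_of_prime_dvd_sub hp hodd (hχ.isUnit hp hodd ha) he ?_
  have h_sub := dvd_sub h (hχ.val_prime p a hp hodd ha).2
  rwa [sub_sub_sub_cancel_left] at h_sub

lemma IsQuadSym.congr_prime (hχ : IsQuadSym χ) (hp : Prime p) (hodd : ¬ ωg ∣ p)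
    (hab : p ∣ a - b) : χ a p = χ b p := by
  by_cases hb : p ∣ b
  · rw [hχ.zero_of_dvd p b hp hb, hχ.zero_of_dvd p a hp ((dvd_iff_dvd_of_dvd_sub hab).mpr hb)]
  · have ha : ¬ p ∣ a := mt (dvd_iff_dvd_of_dvd_sub hab).mp hb
    refine hχ.eq_of_dvd_pow_sub hp hodd ha (hχ.isUnit hp hodd hb) ?_
    have h := dvd_add (hab.trans (sub_dvd_pow_sub_pow a b ((p.norm.toNat - 1) / 2)))
      (hχ.val_prime p b hp hodd hb).2
    rwa [sub_add_sub_cancel] at h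

lemma IsQuadSym.map_mul_prime (hχ : IsQuadSym χ) (hp : Prime p) (hodd : ¬ ωg ∣ p)
    (a b : GaussianInt) : χ (a * b) p = χ a p * χ b p := by
  by_cases ha : p ∣ a
  · rw [hχ.zero_of_dvd p a hp ha, hχ.zero_of_dvd p _ hp (ha.mul_right b), zero_mul]
  by_cases hb : p ∣ b
  · rw [hχ.zero_of_dvd p b hp hb, hχ.zero_of_dvd p _ hp (hb.mul_left a), mul_zero]
  refine hχ.eq_of_dvd_pow_sub hp hodd (hp.not_dvd_mul ha hb)
    ((hχ.isUnit hp hodd ha).mul (hχ.isUnit hp hodd hb)) ?_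
  rw [mul_pow, Int.cast_mul]
  exact dvd_mul_sub_mul (hχ.val_prime p a hp hodd ha).2 (hχ.val_prime p b hp hodd hb).2

lemma IsQuadSym.abs_le_one_prime (hχ : IsQuadSym χ) (hp : Prime p) (hodd : ¬ ωg ∣ p)
    (a : GaussianInt) : |χ a p| ≤ 1 := by
  by_cases ha : p ∣ a
  · simp [hχ.zero_of_dvd p a hp ha]
  · exact (Int.isUnit_iff_abs_eq.mp (hχ.isUnit hp hodd ha)).le

lemma IsQuadSym.ig_prime (hχ : IsQuadSym χ) (hp : Prime p) (hodd : ¬ ωg ∣ p) :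
    χ ig p = if p.norm % 8 = 1 then 1 else -1 := by
  have h_not_dvd : ¬ p ∣ ig := fun h => hp.not_isUnit (isUnit_of_dvd_unit h isUnit_ig)
  have h_norm := norm_emod_four hodd
  have h_nonneg := GaussianInt.norm_nonneg p
  refine hχ.eq_of_dvd_pow_sub hp hodd h_not_dvd (by split_ifs <;> simp) ?_
  have h_pow : ig ^ ((p.norm.toNat - 1) / 2)
      = ((if p.norm % 8 = 1 then 1 else -1 : ℤ) : GaussianInt) := by
    split_ifs with h
    · obtain ⟨k, hk⟩ : ∃ k, (p.norm.toNat - 1) / 2 = 2 * (2 * k) := ⟨p.norm.toNat / 8, by omega⟩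
      rw [hk, pow_mul, ig_sq, (even_two_mul k).neg_one_pow, Int.cast_one]
    · obtain ⟨k, hk⟩ : ∃ k, (p.norm.toNat - 1) / 2 = 2 * (2 * k + 1) :=
        ⟨p.norm.toNat / 8, by omega⟩
      rw [hk, pow_mul, ig_sq, (odd_two_mul_add_one k).neg_one_pow, Int.cast_neg, Int.cast_one]
  rw [h_pow, sub_self]
  exact dvd_zero p

lemma odd_induction {P : ∀ n, ¬ ωg ∣ n → Prop} (unit : ∀ u hu, IsUnit u → P u hu)
    (prime_mul : ∀ p n (_ : ¬ ωg ∣ p) (hn : ¬ ωg ∣ n) (hpn : ¬ ωg ∣ p * n),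
      Prime p → P n hn → P (p * n) hpn) (n : GaussianInt) (hn : ¬ ωg ∣ n) : P n hn := by
  induction n using UniqueFactorizationMonoid.induction_on_prime with
  | h₁ => exact absurd (dvd_zero _) hn
  | h₂ u hu => exact unit u hn hu
  | h₃ n p _ hp ih =>
    have hn' : ¬ ωg ∣ n := fun h => hn (h.mul_left p)
    exact prime_mul p n (fun h => hn (h.mul_right n)) hn' hn hp (ih hn')

lemma IsQuadSym.congr (hχ : IsQuadSym χ) (hn : ¬ ωg ∣ n) (hab : n ∣ a - b) : χ a n = χ b n := by
  induction n, hn using odd_induction with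
  | unit u _ hu => rw [hχ.unit_den a u hu, hχ.unit_den b u hu]
  | prime_mul p n hpodd hnodd _ hp ih =>
    rw [hχ.mul_den a p n hpodd hnodd, hχ.mul_den b p n hpodd hnodd,
      hχ.congr_prime hp hpodd (dvd_of_mul_right_dvd hab), ih (dvd_of_mul_left_dvd hab)]

lemma IsQuadSym.map_mul (hχ : IsQuadSym χ) (hn : ¬ ωg ∣ n) (a b : GaussianInt) :
    χ (a * b) n = χ a n * χ b n := by
  induction n, hn using odd_induction with
  | unit u _ hu => simp only [hχ.unit_den _ u hu, mul_one]
  | prime_mul p n hpodd hnodd _ hp ih =>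
    simp only [hχ.mul_den _ p n hpodd hnodd, hχ.map_mul_prime hp hpodd, ih]
    ring

lemma IsQuadSym.abs_le_one (hχ : IsQuadSym χ) (hn : ¬ ωg ∣ n) (a : GaussianInt) :
    |χ a n| ≤ 1 := by
  induction n, hn using odd_induction with
  | unit u _ hu => simp [hχ.unit_den a u hu]
  | prime_mul p n hpodd hnodd _ hp ih =>
    rw [hχ.mul_den a p n hpodd hnodd, abs_mul]
    exact mul_le_one₀ (hχ.abs_le_one_prime hp hpodd a) (abs_nonneg _) ih

lemma IsQuadSym.ig_eq (hχ : IsQuadSym χ) (hn : ¬ ωg ∣ n) :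
    χ ig n = if n.norm % 8 = 1 then 1 else -1 := by
  induction n, hn using odd_induction with
  | unit u _ hu =>
    have h_norm : u.norm = 1 := (Zsqrtd.norm_eq_one_iff' (by norm_num) u).mpr hu
    rw [hχ.unit_den ig u hu, h_norm, if_pos (by norm_num)]
  | prime_mul p n hpodd hnodd _ hp ih =>
    rw [hχ.mul_den ig p n hpodd hnodd, hχ.ig_prime hp hpodd, ih, Zsqrtd.norm_mul]
    have hp8 : p.norm % 8 = 1 ∨ p.norm % 8 = 5 := by have := norm_emod_four hpodd; omega
    have hn8 : n.norm % 8 = 1 ∨ n.norm % 8 = 5 := by have := norm_emod_four hnodd; omega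
    rcases hp8 with hp8 | hp8 <;> rcases hn8 with hn8 | hn8 <;> simp [Int.mul_emod, hp8, hn8]

end QuadraticSymbol

section TwistedCharacter

variable {χ : GaussianInt → GaussianInt → ℤ} {l m a b : GaussianInt}

lemma two_dvd_iff : 2 ∣ m ↔ m.re % 2 = 0 ∧ m.im % 2 = 0 := by
  simpa only [Int.dvd_iff_emod_eq_zero] using! Zsqrtd.intCast_dvd (d := -1) 2 m

lemma psi1_congr (hab : 2 ∣ a - b) : psi1 a = psi1 b := by
  obtain ⟨c, hc⟩ := hab
  simp only [psi1, eq_add_of_sub_eq' hc, IsCoprime.add_mul_left_left_iff]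

lemma psi1_ig_mul (m : GaussianInt) : psi1 (ig * m) = psi1 m := by
  simp only [psi1, isCoprime_mul_unit_left_left isUnit_ig]

lemma psi1_eq_zero (hm : ωg ∣ m) : psi1 m = 0 := by
  refine if_neg fun h => ?_
  have h_unit := h.isUnit_of_dvd' hm (by rw [ωg_dvd_iff]; rfl)
  rw [isUnit_iff_dvd_one, ωg_dvd_iff] at h_unit
  exact absurd h_unit (by decide)

lemma norm_psi1_le_one (m : GaussianInt) : ‖psi1 m‖ ≤ 1 := by
  unfold psi1
  split_ifs <;> simp

lemma psi2_congr (hab : 2 ∣ a - b) : psi2 a = psi2 b := by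
  have h (c : GaussianInt) : 2 ∣ a - c ↔ 2 ∣ b - c := by
    rw [← sub_add_sub_cancel a b c, dvd_add_right hab]
  simp only [psi2, h]

lemma psi2_ig_mul (m : GaussianInt) : psi2 (ig * m) = -psi2 m := by
  simp only [psi2, two_dvd_iff, ig, Zsqrtd.re_sub, Zsqrtd.im_sub, Zsqrtd.re_mul, Zsqrtd.im_mul,
    Zsqrtd.re_one, Zsqrtd.im_one]
  split_ifs <;> first | omega | simp

lemma psi2_eq_zero (hm : ωg ∣ m) : psi2 m = 0 := by
  rw [ωg_dvd_iff] at hm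
  simp only [psi2, two_dvd_iff, ig, Zsqrtd.re_sub, Zsqrtd.im_sub, Zsqrtd.re_one, Zsqrtd.im_one]
  rw [if_neg (by omega), if_neg (by omega)]

lemma norm_psi2_le_one (m : GaussianInt) : ‖psi2 m‖ ≤ 1 := by
  unfold psi2
  split_ifs <;> simp

lemma IsQuadSym.tchi_congr (hχ : IsQuadSym χ) (hl : IsPrimary l) (hab : 2 * l ∣ a - b) :
    tchi χ l a = tchi χ l b := by
  have h2 : 2 ∣ a - b := dvd_of_mul_right_dvd hab
  rw [tchi, tchi, psi1_congr h2, psi2_congr h2,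
    hχ.congr hl.not_ωg_dvd (dvd_of_mul_left_dvd hab)]

lemma IsQuadSym.norm_tchi_le_one (hχ : IsQuadSym χ) (hl : IsPrimary l) (a : GaussianInt) :
    ‖tchi χ l a‖ ≤ 1 := by
  have hψ : ‖if IsTypeOne l then psi1 a else psi2 a‖ ≤ 1 := by
    split_ifs
    exacts [norm_psi1_le_one a, norm_psi2_le_one a]
  have hχ_le : ‖(χ a l : ℂ)‖ ≤ 1 := by
    rw [Complex.norm_intCast]
    exact_mod_cast hχ.abs_le_one hl.not_ωg_dvd a
  rw [tchi, norm_mul]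
  exact mul_le_one₀ hψ (norm_nonneg _) hχ_le

/-- The twist by `ψ_j` is chosen so that the signs of `ψ_j` and of `(·/l)` at `i` cancel. -/
lemma IsQuadSym.tchi_ig_mul (hχ : IsQuadSym χ) (hl : IsPrimary l) (a : GaussianInt) :
    tchi χ l (ig * a) = tchi χ l a := by
  rw [tchi, tchi, hχ.map_mul hl.not_ωg_dvd, hχ.ig_eq hl.not_ωg_dvd, psi1_ig_mul, psi2_ig_mul]
  simp only [← hl.isTypeOne_iff]
  split_ifs <;> simp

lemma tchi_eq_zero (χ : GaussianInt → GaussianInt → ℤ) (l : GaussianInt) (ha : ωg ∣ a) :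
    tchi χ l a = 0 := by
  rw [tchi, psi1_eq_zero ha, psi2_eq_zero ha, ite_self, zero_mul]

end TwistedCharacter

section SumOverPrimary

variable {n : GaussianInt} {F : GaussianInt → ℂ}

lemma sum_ite_isPrimary_ig_pow_mul (hn : ¬ ωg ∣ n) :
    ∑ j : Fin 4, (if IsPrimary (ig ^ (j : ℕ) * n) then 1 else 0) = 1 := by
  rw [ωg_dvd_iff] at hn
  have h_pow : ig ^ 3 = -ig := by rw [pow_succ, ig_sq, neg_one_mul]
  simp only [Fin.sum_univ_four, Fin.coe_ofNat_eq_mod, Nat.reduceMod, pow_zero, pow_one, ig_sq,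
    h_pow, isPrimary_iff, one_mul, neg_mul, Zsqrtd.re_neg, Zsqrtd.im_neg, Zsqrtd.re_mul,
    Zsqrtd.im_mul, Zsqrtd.re_one, Zsqrtd.im_one]
  simp only [ig, zero_mul, one_mul, neg_zero, zero_add, add_zero]
  split_ifs <;> omega

lemma sum_indicator_ig_pow_mul (hF_ig : ∀ n, F (ig * n) = F n) (hF_zero : ∀ n, ωg ∣ n → F n = 0)
    (n : GaussianInt) : ∑ j : Fin 4, {n | IsPrimary n}.indicator F (ig ^ (j : ℕ) * n) = F n := by
  have hF_pow (j : ℕ) : F (ig ^ j * n) = F n := by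
    induction j with
    | zero => rw [pow_zero, one_mul]
    | succ j ih => rw [pow_succ', mul_assoc, hF_ig, ih]
  by_cases hn : ωg ∣ n
  · simp [Set.indicator_apply, hF_pow, hF_zero n hn]
  calc ∑ j : Fin 4, {n | IsPrimary n}.indicator F (ig ^ (j : ℕ) * n)
      = ((∑ j : Fin 4, if IsPrimary (ig ^ (j : ℕ) * n) then 1 else 0 : ℕ) : ℂ) * F n := by
        simp only [Set.indicator_apply, Set.mem_ofPred_eq, hF_pow, Nat.cast_sum, Nat.cast_ite,
          Nat.cast_one, Nat.cast_zero, Finset.sum_mul, ite_mul, one_mul, zero_mul]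
    _ = F n := by rw [sum_ite_isPrimary_ig_pow_mul hn, Nat.cast_one, one_mul]

lemma tsum_eq_four_mul_tsum_isPrimary (hF : Summable F) (hF_ig : ∀ n, F (ig * n) = F n)
    (hF_zero : ∀ n, ωg ∣ n → F n = 0) :
    ∑' n, F n = 4 * ∑' n : {n // IsPrimary n}, F n := by
  let P := {n | IsPrimary n}
  let mulIgPow (j : Fin 4) : GaussianInt ≃ GaussianInt := (isUnit_ig.unit ^ (j : ℕ)).mulLeft
  have h_summable (j : Fin 4) : Summable fun n => P.indicator F (ig ^ (j : ℕ) * n) :=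
    (mulIgPow j).summable_iff.mpr (hF.indicator P)
  calc ∑' n, F n = ∑' n, ∑ j : Fin 4, P.indicator F (ig ^ (j : ℕ) * n) := by
        simp only [P, sum_indicator_ig_pow_mul hF_ig hF_zero]
    _ = ∑ j : Fin 4, ∑' n, P.indicator F (ig ^ (j : ℕ) * n) :=
        Summable.tsum_finsetSum fun j _ => h_summable j
    _ = ∑ _j : Fin 4, ∑' n, P.indicator F n :=
        Finset.sum_congr rfl fun j _ => (mulIgPow j).tsum_eq (P.indicator F)
    _ = 4 * ∑' n : {n // IsPrimary n}, F n := by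
        rw [Fin.sum_const, nsmul_eq_mul, ← tsum_subtype P F]
        rfl

end SumOverPrimary

lemma IsMobiusG.norm_le_one {μ : GaussianInt → ℤ} (hμ : IsMobiusG μ) {k : GaussianInt}
    (hk : k ≠ 0) : ‖(μ k : ℂ)‖ ≤ 1 := by
  obtain ⟨h_one, h_mul, h_prime, h_pow⟩ := hμ
  induction k using UniqueFactorizationMonoid.induction_on_coprime with
  | h0 => exact absurd rfl hk
  | @h1 u hu =>
    obtain ⟨v, huv⟩ := IsUnit.exists_right_inv hu
    have hμu : μ u * μ v = 1 := by
      rw [← h_mul u v (isRelPrime_iff_isCoprime.mp (IsUnit.isRelPrime_left hu)), huv, h_one]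
    rcases Int.isUnit_iff.mp (.of_mul_eq_one _ hμu) with h | h <;> simp [h]
  | @hpr p i hp =>
    rcases Nat.lt_or_ge i 2 with hi | hi
    · interval_cases i <;> simp [h_one, h_prime p hp]
    · simp [h_pow p i hp hi]
  | hcp hxy ihx ihy =>
    rw [h_mul _ _ (isRelPrime_iff_isCoprime.mp hxy), Int.cast_mul, norm_mul]
    exact mul_le_one₀ (ihx (left_ne_zero_of_mul hk)) (norm_nonneg _) (ihy (right_ne_zero_of_mul hk))

section DoubleDirichletSeries

lemma Nm_two : Nm 2 = 4 := by
  simp [Nm, Zsqrtd.norm_def]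

lemma Nm_ig_mul (n : GaussianInt) : Nm (ig * n) = Nm n := by
  have h : Nm ig = 1 := by simp [Nm, Zsqrtd.norm_def, ig]
  rw [Nm_mul, h, one_mul]

lemma IsPrimary.two_mul_ne_zero {l : GaussianInt} (hl : IsPrimary l) : 2 * l ≠ 0 :=
  mul_ne_zero (by decide) hl.ne_zero

lemma tsum_ne_zero_div_Nm_cpow (g : GaussianInt → ℂ) {s : ℂ} (hs : s ≠ 0) :
    ∑' q : {q : GaussianInt // q ≠ 0}, g q / (Nm q : ℂ) ^ s = ∑' q, g q / (Nm q : ℂ) ^ s := by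
  refine tsum_subtype_eq_of_support_subset (s := {q | q ≠ 0})
    (f := fun q => g q / (Nm q : ℂ) ^ s) fun q hq => ?_
  rintro rfl
  exact hq (by simp [Nm_zero, hs])

variable {χ : GaussianInt → GaussianInt → ℤ}

theorem IsQuadSym.functional_equation_tchi (hχ : IsQuadSym χ) {l : GaussianInt}
    (hl : IsPrimary l) {L : ℂ → ℂ} (hL : Differentiable ℂ L)
    (hL_eq : ∀ s : ℂ, 1 < s.re →
      L s = ∑' m : {m : GaussianInt // IsPrimary m}, tchi χ l m / (Nm m : ℂ) ^ s)
    {g : GaussianInt → ℂ} (hg : IsGaussSumChar (2 * l) (tchi χ l) g) {s : ℂ} (hs : s.re < 0) :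
    L s = (4 : ℂ) ^ (-s) * (π : ℂ) ^ (2 * s - 1) * Complex.Gamma (1 - s) / (4 * Complex.Gamma s) *
      ((Nm l : ℂ) ^ (-s) * ∑' q : {q : GaussianInt // q ≠ 0}, g q / (Nm q : ℂ) ^ (1 - s)) := by
  have hL_eq_full (s : ℂ) (hs : 1 < s.re) : 4 * L s = ∑' n, tchi χ l n / (Nm n : ℂ) ^ s := by
    rw [hL_eq s hs]
    refine (tsum_eq_four_mul_tsum_isPrimary (F := fun n => tchi χ l n / (Nm n : ℂ) ^ s)
      (summable_div_Nm_cpow (hχ.norm_tchi_le_one hl) hs) (fun n => ?_) fun n hn => ?_).symm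
    · rw [hχ.tchi_ig_mul hl, Nm_ig_mul]
    · rw [tchi_eq_zero χ l hn, zero_div]
  have h_fe := functional_equation_of_periodic hl.two_mul_ne_zero
    (fun a b => hχ.tchi_congr hl) hg (hL.const_mul 4) hL_eq_full hs
  have h_Nm : (Nm (2 * l) : ℂ) ^ (-s) = 4 ^ (-s) * (Nm l : ℂ) ^ (-s) := by
    rw [Nm_mul, Nm_two, ofReal_mul, mul_cpow_ofReal_nonneg zero_le_four (Nm_nonneg l)]
    norm_num
  have h_ne : 1 - s ≠ 0 := sub_ne_zero.mpr (by rintro rfl; norm_num at hs)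
  rw [h_Nm, ← tsum_ne_zero_div_Nm_cpow g h_ne] at h_fe
  linear_combination (1 / 4) * h_fe

lemma norm_div_Nm_cpow_mul_le {a g : ℂ} {A B : ℝ} {q m k : GaussianInt} (hq : q ≠ 0) (hm : m ≠ 0)
    (hk : k ≠ 0) (ha : ‖a‖ ≤ A) (hg : ‖g‖ ≤ B * Nm (m * k)) (u v w : ℂ) :
    ‖a * g / ((Nm q : ℂ) ^ u * (Nm m : ℂ) ^ v * (Nm k : ℂ) ^ w)‖ ≤
      A * B * (1 / Nm q ^ u.re * (1 / Nm m ^ (v.re - 1) * (1 / Nm k ^ (w.re - 1)))) := by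
  have hq' := Nm_pos hq
  have hm' := Nm_pos hm
  have hk' := Nm_pos hk
  rw [norm_div, norm_mul, norm_mul, norm_mul, norm_Nm_cpow hq, norm_Nm_cpow hm, norm_Nm_cpow hk]
  calc ‖a‖ * ‖g‖ / (Nm q ^ u.re * Nm m ^ v.re * Nm k ^ w.re)
      ≤ A * (B * Nm (m * k)) / (Nm q ^ u.re * Nm m ^ v.re * Nm k ^ w.re) := by
        have := (norm_nonneg a).trans ha
        gcongr
    _ = _ := by
        rw [Nm_mul, Real.rpow_sub_one hm'.ne', Real.rpow_sub_one hk'.ne']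
        field_simp

lemma summable_triple_div_Nm_cpow {a : GaussianInt → ℂ} {G : GaussianInt → GaussianInt → ℂ}
    {A B : ℝ} (ha : ∀ k, IsPrimary k → ‖a k‖ ≤ A)
    (hG : ∀ q l, IsPrimary l → ‖G q l‖ ≤ B * Nm l) {u v w : ℂ} (hu : 1 < u.re) (hv : 2 < v.re)
    (hw : 2 < w.re) :
    Summable fun pq : {q : GaussianInt // q ≠ 0} × NSqPairs =>
      a pq.2.1.2 * G pq.1 (pq.2.1.1 * pq.2.1.2) /
        ((Nm pq.1 : ℂ) ^ u * (Nm pq.2.1.1 : ℂ) ^ v * (Nm pq.2.1.2 : ℂ) ^ w) := by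
  have h_nonneg (σ : ℝ) (n : GaussianInt) : 0 ≤ 1 / Nm n ^ σ :=
    one_div_nonneg.mpr (Real.rpow_nonneg (Nm_nonneg n) σ)
  have hv' : 1 < v.re - 1 := by linarith
  have hw' : 1 < w.re - 1 := by linarith
  have h_double := (summable_one_div_Nm_rpow hv').mul_of_nonneg (summable_one_div_Nm_rpow hw')
    (h_nonneg _) (h_nonneg _)
  have h_triple := (summable_one_div_Nm_rpow hu).mul_of_nonneg h_double (h_nonneg _)
    fun p => mul_nonneg (h_nonneg _ p.1) (h_nonneg _ p.2)
  have h_inj : Function.Injective fun pq : {q : GaussianInt // q ≠ 0} × NSqPairs =>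
      ((pq.1 : GaussianInt), (pq.2 : GaussianInt × GaussianInt)) :=
    Subtype.val_injective.prodMap Subtype.val_injective
  refine .of_norm_bounded ((h_triple.comp_injective h_inj).mul_left (A * B)) ?_
  rintro ⟨⟨q, hq⟩, ⟨⟨m, k⟩, hm, hk, -⟩⟩
  exact norm_div_Nm_cpow_mul_le hq hm.ne_zero hk.ne_zero (ha k hk) (hG q _ (hm.mul hk)) u v w

lemma Nm_mul_cpow_neg_div {m k : GaussianInt} (hm : m ≠ 0) (hk : k ≠ 0) (s w z : ℂ) :
    (Nm (m * k) : ℂ) ^ (-s) / ((Nm m : ℂ) ^ w * (Nm k : ℂ) ^ z) =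
      1 / ((Nm m : ℂ) ^ (s + w) * (Nm k : ℂ) ^ (s + z)) := by
  rw [Nm_mul, ofReal_mul, mul_cpow_ofReal_nonneg (Nm_nonneg m) (Nm_nonneg k),
    cpow_neg, cpow_neg, cpow_add _ _ (ofReal_Nm_ne_zero hm), cpow_add _ _ (ofReal_Nm_ne_zero hk)]
  simp only [div_eq_mul_inv, mul_inv, one_mul]
  ring

theorem A2_functional_equation_general (hχ : IsQuadSym χ) {a : GaussianInt → ℂ} {A : ℝ}
    (ha : ∀ k, IsPrimary k → ‖a k‖ ≤ A) {Lt : ℂ → GaussianInt → ℂ}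
    (hser : ∀ l : GaussianInt, IsPrimary l → ∀ s : ℂ, 1 < s.re →
      Lt s l = ∑' m : {m : GaussianInt // IsPrimary m}, tchi χ l m.1 / (Nm m.1 : ℂ) ^ s)
    (hdiff : ∀ l : GaussianInt, IsPrimary l → (¬ ∃ r : GaussianInt, l = r ^ 2) →
      Differentiable ℂ (fun s => Lt s l))
    {G : GaussianInt → GaussianInt → ℂ}
    (hG : ∀ l : GaussianInt, IsPrimary l → IsGaussSumChar (2 * l) (tchi χ l) (fun q => G q l))
    {s w z : ℂ} (hs : s.re < 0) (hw : 2 < (s + w).re) (hz : 2 < (s + z).re) :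
    HasSum (fun p : NSqPairs =>
        a p.1.2 * Lt s (p.1.1 * p.1.2) / ((Nm p.1.1 : ℂ) ^ w * (Nm p.1.2 : ℂ) ^ z))
      ((4 : ℂ) ^ (-s) * (π : ℂ) ^ (2 * s - 1) * Complex.Gamma (1 - s) / (4 * Complex.Gamma s) *
        ∑' pq : {k : GaussianInt // k ≠ 0} × NSqPairs,
          a pq.2.1.2 * G pq.1.1 (pq.2.1.1 * pq.2.1.2) /
            ((Nm pq.1.1 : ℂ) ^ (1 - s) * (Nm pq.2.1.1 : ℂ) ^ (s + w) *
              (Nm pq.2.1.2 : ℂ) ^ (s + z))) := by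
  have hG_le (q l : GaussianInt) (hl : IsPrimary l) : ‖G q l‖ ≤ 4 * Nm l := by
    have h := (hG l hl).norm_le hl.two_mul_ne_zero (hχ.norm_tchi_le_one hl) q
    rwa [one_mul, Nm_mul, Nm_two] at h
  have hs' : 1 < (1 - s).re := by rw [sub_re, one_re]; linarith
  have h_swap := (summable_triple_div_Nm_cpow ha hG_le hs' hw hz).prod_symm
  rw [← (Equiv.prodComm _ _).tsum_eq]
  refine ((h_swap.hasSum.prod_fiberwise fun p => (h_swap.prod_factor p).hasSum).mul_left
    _).congr_fun ?_
  rintro ⟨⟨m, k⟩, hm, hk, hmk⟩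
  have hl := hm.mul hk
  have h_term (q : {q : GaussianInt // q ≠ 0}) :
      a k * G q (m * k) /
          ((Nm q : ℂ) ^ (1 - s) * (Nm m : ℂ) ^ (s + w) * (Nm k : ℂ) ^ (s + z)) =
        a k * (1 / ((Nm m : ℂ) ^ (s + w) * (Nm k : ℂ) ^ (s + z))) *
          (G q (m * k) / (Nm q : ℂ) ^ (1 - s)) := by
    simp only [div_eq_mul_inv, mul_inv]
    ring
  simp only [Prod.swap_prod_mk, h_term, tsum_mul_left]
  rw [hχ.functional_equation_tchi hl (hdiff _ hl hmk) (hser _ hl) (hG _ hl) hs,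
    ← Nm_mul_cpow_neg_div hm.ne_zero hk.ne_zero]
  ring

end DoubleDirichletSeries

/-- the functional equation (3.9) of the paper,
`A₂(s,w,z) = (4^{−s} π^{2s−1} Γ(1−s)/(4Γ(s))) C(1−s, s+w, s+z)`, stated in a region where
both series converge. -/
theorem A2_functional_equation
    (χ : GaussianInt → GaussianInt → ℤ) (hχ : IsQuadSym χ)
    (μ : GaussianInt → ℤ) (hμ : IsMobiusG μ)
    (Lt : ℂ → GaussianInt → ℂ)
    (hser : ∀ l : GaussianInt, IsPrimary l → ∀ s : ℂ, 1 < s.re →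
      Lt s l = ∑' m : {m : GaussianInt // IsPrimary m}, tchi χ l m.1 / (Nm m.1 : ℂ) ^ s)
    (hdiff : ∀ l : GaussianInt, IsPrimary l → (¬ ∃ r : GaussianInt, l = r ^ 2) →
      Differentiable ℂ (fun s => Lt s l))
    (G : GaussianInt → GaussianInt → ℂ)
    (hG : ∀ l : GaussianInt, IsPrimary l → IsGaussSumChar (2 * l) (tchi χ l) (fun q => G q l)) :
    ∀ s w z : ℂ, s.re < -1 → 3 < (s + w).re → 3 < (s + z).re →
      (∑' p : NSqPairs,
          (μ p.1.2 : ℂ) * Lt s (p.1.1 * p.1.2) / ((Nm p.1.1 : ℂ) ^ w * (Nm p.1.2 : ℂ) ^ z)) =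
        (4 : ℂ) ^ (-s) * (Real.pi : ℂ) ^ (2 * s - 1) * Complex.Gamma (1 - s) /
            (4 * Complex.Gamma s) *
          ∑' pq : {k : GaussianInt // k ≠ 0} × NSqPairs,
            (μ pq.2.1.2 : ℂ) * G pq.1.1 (pq.2.1.1 * pq.2.1.2) /
              ((Nm pq.1.1 : ℂ) ^ (1 - s) * (Nm pq.2.1.1 : ℂ) ^ (s + w) *
                (Nm pq.2.1.2 : ℂ) ^ (s + z)) :=
  fun _ _ _ hs hw hz =>
    (A2_functional_equation_general hχ (fun _ hk => hμ.norm_le_one hk.ne_zero) hser hdiff hG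
      (by linarith) (by linarith) (by linarith)).tsum_eq
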